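/- arXiv:2104.06612 — 5 statements merged into one kernel-verified Lean document; each statement's English description precedes it below -/
import Mathlib

section
/- Let P and Q be probability measures on a measurable space X with P absolutely continuous with respect to Q and with finite Kullback–Leibler divergence D_KL(P‖Q). Then for every bounded measurable function T : X → ℝ, one has ∫ T dP − log (∫ e^T dQ) ≤ D_KL(P‖Q). -/
open MeasureTheory

/-- The Kullback–Leibler divergence `∫ log (dP/dQ) dP`. -/
noncomputable def klDiv {X : Type*} [MeasurableSpace X]
    (P Q : Measure X) : ℝ :=
  ∫ x, Real.log ((P.rnDeriv Q x).toReal) ∂P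

/-- Donsker–Varadhan lower bound: for every bounded measurable `T`,
`∫ T dP − log (∫ e^T dQ) ≤ D_KL(P‖Q)`. -/
theorem donsker_varadhan_lower_bound
    {X : Type*} [MeasurableSpace X] (P Q : Measure X)
    [IsProbabilityMeasure P] [IsProbabilityMeasure Q]
    (hPQ : P ≪ Q)
    (hKL : Integrable (fun x => Real.log ((P.rnDeriv Q x).toReal)) P)
    (T : X → ℝ) (hT : Measurable T) (C : ℝ) (hC : ∀ x, |T x| ≤ C) :
    ∫ x, T x ∂P - Real.log (∫ x, Real.exp (T x) ∂Q) ≤ klDiv P Q := by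
  have hTP : Integrable T P :=
    Integrable.of_bound hT.aestronglyMeasurable C (Filter.Eventually.of_forall hC)
  have hexp : Integrable (fun x => Real.exp (T x)) Q := by
    refine Integrable.of_bound (Real.measurable_exp.comp hT).aestronglyMeasurable
      (Real.exp C) (Filter.Eventually.of_forall fun x => ?_)
    rw [Real.norm_eq_abs, abs_of_pos (Real.exp_pos _)]
    exact Real.exp_le_exp.mpr ((le_abs_self _).trans (hC x))
  have hKL' : Integrable (llr P Q) P := hKL
  have hprob : IsProbabilityMeasure (Q.tilted T) := isProbabilityMeasure_tilted hexp
  have hac : P ≪ Q.tilted T := hPQ.trans (absolutelyContinuous_tilted hexp)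
  have h := InformationTheory.integral_llr_add_sub_measure_univ_nonneg hac
    (integrable_llr_tilted_right hPQ hTP hKL' hexp)
  rw [integral_llr_tilted_right hPQ hTP hexp hKL'] at h
  simp only [probReal_univ] at h
  have hk : klDiv P Q = ∫ x, llr P Q x ∂P := rfl
  rw [hk]
  linarith
end

section
/- Let P and Q be probability measures on a measurable space X with P absolutely continuous with respect to Q and with finite Kullback–Leibler divergence, let T : X → ℝ be bounded measurable, Z = ∫ e^T dQ, and let G be the Gibbs measure with density e^T / Z with respect to Q. Then ∫ T dP − log Z = D_KL(P‖Q) if and only if P = G (i.e., P coincides with G as measures, equivalently the densities agree Q-almost everywhere). -/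
open MeasureTheory

/-- Equality in the Donsker–Varadhan bound holds if and only if `P` coincides with
the Gibbs measure `G` with density `e^T / Z` with respect to `Q`. -/
theorem donsker_varadhan_equality_iff_gibbs
    {X : Type*} [MeasurableSpace X] (P Q : Measure X)
    [IsProbabilityMeasure P] [IsProbabilityMeasure Q]
    (hPQ : P ≪ Q)
    (hKL : Integrable (fun x => Real.log ((P.rnDeriv Q x).toReal)) P)
    (T : X → ℝ) (hT : Measurable T) (C : ℝ) (hC : ∀ x, |T x| ≤ C)
    (Z : ℝ) (hZ : Z = ∫ x, Real.exp (T x) ∂Q)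
    (G : Measure X)
    (hG : G = Q.withDensity (fun x => ENNReal.ofReal (Real.exp (T x) / Z))) :
    (∫ x, T x ∂P - Real.log Z = klDiv P Q) ↔ P = G := by
  have hI : Integrable (fun x => Real.exp (T x)) Q := by
    refine Integrable.of_bound (by fun_prop) (Real.exp C) (ae_of_all _ fun x => ?_)
    rw [Real.norm_eq_abs, Real.abs_exp]
    exact Real.exp_le_exp.2 ((le_abs_self _).trans (hC x))
  have hTP : Integrable T P :=
    Integrable.of_bound (by fun_prop) C (ae_of_all _ hC)
  have hG' : G = Q.tilted T := by rw [hG, hZ]; rfl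
  have hPG : P ≪ Q.tilted T := hPQ.trans (absolutelyContinuous_tilted hI)
  have : IsProbabilityMeasure (Q.tilted T) := isProbabilityMeasure_tilted hI
  have hint : Integrable (llr P (Q.tilted T)) P :=
    integrable_llr_tilted_right hPQ hTP hKL hI
  have h := integral_llr_tilted_right hPQ hTP hI hKL
  have h2 := InformationTheory.toReal_klDiv_of_measure_eq hPG (by simp)
  have h3 := InformationTheory.klDiv_ne_top hPG hint
  have hk : klDiv P Q = ∫ x, llr P Q x ∂P := rfl
  rw [hG', ← InformationTheory.klDiv_eq_zero_iff (μ := P) (ν := Q.tilted T), hk, hZ]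
  constructor
  · intro e
    have h0 : (InformationTheory.klDiv P (Q.tilted T)).toReal = 0 := by linarith
    exact ((ENNReal.toReal_eq_zero_iff _).1 h0).resolve_right h3
  · intro e
    rw [e, ENNReal.toReal_zero] at h2
    linarith
end

section
/- (Form of the optimal critic, Eq. 3 of the paper.) Let P and Q be probability measures on a measurable space X with P absolutely continuous with respect to Q and with finite Kullback–Leibler divergence. If a bounded measurable function T : X → ℝ achieves equality in the Donsker–Varadhan bound, i.e., ∫ T dP − log (∫ e^T dQ) = D_KL(P‖Q), then e^{T(x)} = (∫ e^T dQ) · (dP/dQ)(x) for Q-almost every x; equivalently, T(x) = log (dP/dQ)(x) + log (∫ e^T dQ) for Q-almost every x in the set where dP/dQ > 0. -/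
open MeasureTheory

/-- Form of the optimal critic: if a bounded measurable `T` achieves equality in the
Donsker–Varadhan bound, then `e^T = (∫ e^T dQ) · (dP/dQ)` Q-a.e.; equivalently,
`T = log (dP/dQ) + log (∫ e^T dQ)` Q-a.e. on the set where `dP/dQ > 0`. -/
theorem optimal_critic_form
    {X : Type*} [MeasurableSpace X] (P Q : Measure X)
    [IsProbabilityMeasure P] [IsProbabilityMeasure Q]
    (hPQ : P ≪ Q)
    (hKL : Integrable (fun x => Real.log ((P.rnDeriv Q x).toReal)) P)
    (T : X → ℝ) (hT : Measurable T) (C : ℝ) (hC : ∀ x, |T x| ≤ C)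
    (heq : ∫ x, T x ∂P - Real.log (∫ x, Real.exp (T x) ∂Q) = klDiv P Q) :
    (∀ᵐ x ∂Q,
        Real.exp (T x) = (∫ y, Real.exp (T y) ∂Q) * (P.rnDeriv Q x).toReal) ∧
    (∀ᵐ x ∂Q, 0 < (P.rnDeriv Q x).toReal →
        T x = Real.log ((P.rnDeriv Q x).toReal)
            + Real.log (∫ y, Real.exp (T y) ∂Q)) := by
  have hTQ : Integrable (fun x => Real.exp (T x)) Q := by
    refine Integrable.of_bound (C := Real.exp C) (by fun_prop) (ae_of_all _ fun x => ?_)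
    rw [Real.norm_eq_abs, abs_of_pos (Real.exp_pos _)]
    exact Real.exp_le_exp.2 ((le_abs_self _).trans (hC x))
  have hTP : Integrable T P :=
    Integrable.of_bound (C := C) (by fun_prop) (ae_of_all _ fun x => hC x)
  have hZ : 0 < ∫ y, Real.exp (T y) ∂Q := integral_exp_pos hTQ
  haveI : IsProbabilityMeasure (Q.tilted T) := isProbabilityMeasure_tilted hTQ
  have hac : P ≪ Q.tilted T := hPQ.trans (absolutelyContinuous_tilted hTQ)
  have hint : Integrable (llr P (Q.tilted T)) P :=
    integrable_llr_tilted_right hPQ hTP hKL hTQ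
  have h0 : ∫ x, llr P (Q.tilted T) x ∂P = 0 := by
    rw [integral_llr_tilted_right hPQ hTP hTQ hKL]
    have : klDiv P Q = ∫ x, llr P Q x ∂P := rfl
    linarith
  have hP : P = Q.tilted T := by
    rw [← InformationTheory.klDiv_eq_zero_iff,
      InformationTheory.klDiv_of_ac_of_integrable hac hint, h0]
    simp
  have hd : ∀ᵐ x ∂Q,
      Real.exp (T x) = (∫ y, Real.exp (T y) ∂Q) * (P.rnDeriv Q x).toReal := by
    have h1 := rnDeriv_tilted_left_self (μ := Q) hT.aemeasurable
    rw [← hP] at h1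
    filter_upwards [h1] with x hx
    rw [hx, ENNReal.toReal_ofReal (by positivity)]
    field_simp
  refine ⟨hd, ?_⟩
  filter_upwards [hd] with x hx hpos
  rw [← Real.log_exp (T x), hx, Real.log_mul hZ.ne' hpos.ne', add_comm]
end

section
/- (Linearized Donsker–Varadhan bound, the objective of Eq. 6 of the paper.) Let P and Q be probability measures on a measurable space X with P absolutely continuous with respect to Q and with finite Kullback–Leibler divergence. Let f : X → ℝ be measurable with 0 < c ≤ f(x) ≤ C < ∞ for all x, and let a > 0. Then ∫ log f dP − (∫ f dQ)/a − log a + 1 ≤ D_KL(P‖Q). -/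
open MeasureTheory

/-- Linearized Donsker–Varadhan bound: for measurable `f` bounded between positive
constants and any `a > 0`, `∫ log f dP − (∫ f dQ)/a − log a + 1 ≤ D_KL(P‖Q)`. -/
theorem linearized_donsker_varadhan_bound
    {X : Type*} [MeasurableSpace X] (P Q : Measure X)
    [IsProbabilityMeasure P] [IsProbabilityMeasure Q]
    (hPQ : P ≪ Q)
    (hKL : Integrable (fun x => Real.log ((P.rnDeriv Q x).toReal)) P)
    (f : X → ℝ) (hf : Measurable f) (c C : ℝ) (hc : 0 < c)
    (hfc : ∀ x, c ≤ f x) (hfC : ∀ x, f x ≤ C)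
    (a : ℝ) (ha : 0 < a) :
    ∫ x, Real.log (f x) ∂P - (∫ x, f x ∂Q) / a - Real.log a + 1 ≤ klDiv P Q := by
  have hpos : ∀ x, 0 < f x := fun x => lt_of_lt_of_le hc (hfc x)
  have hexp : (fun x => Real.exp (Real.log (f x))) = f :=
    funext fun x => Real.exp_log (hpos x)
  have hfQ : Integrable f Q := by
    refine Integrable.of_bound hf.aestronglyMeasurable C (ae_of_all _ fun x => ?_)
    rw [Real.norm_eq_abs, abs_of_pos (hpos x)]
    exact hfC x
  have hlogP : Integrable (fun x => Real.log (f x)) P := by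
    refine Integrable.of_bound hf.log.aestronglyMeasurable (|Real.log c| + |Real.log C|)
      (ae_of_all _ fun x => ?_)
    have h1 := Real.log_le_log hc (hfc x)
    have h2 := Real.log_le_log (hpos x) (hfC x)
    rw [Real.norm_eq_abs, abs_le]
    constructor
    · linarith [neg_abs_le (Real.log c), abs_nonneg (Real.log C)]
    · linarith [le_abs_self (Real.log C), abs_nonneg (Real.log c)]
  have hexpQ : Integrable (fun x => Real.exp (Real.log (f x))) Q := by rw [hexp]; exact hfQ
  have hKL' : Integrable (llr P Q) P := hKL
  have hac : P ≪ Q.tilted (fun x => Real.log (f x)) :=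
    hPQ.trans (absolutelyContinuous_tilted hexpQ)
  have : IsProbabilityMeasure (Q.tilted (fun x => Real.log (f x))) :=
    isProbabilityMeasure_tilted hexpQ
  have hG := InformationTheory.integral_llr_add_sub_measure_univ_nonneg hac
    (integrable_llr_tilted_right hPQ hlogP hKL' hexpQ)
  rw [integral_llr_tilted_right hPQ hlogP hexpQ hKL', integral_congr_ae
    (ae_of_all Q fun x => Real.exp_log (hpos x))] at hG
  simp only [probReal_univ] at hG
  have hk : ∫ x, llr P Q x ∂P = klDiv P Q := rfl
  rw [hk] at hG
  have hI : 0 < ∫ x, f x ∂Q := by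
    have h := integral_mono (integrable_const c) hfQ hfc
    simp only [integral_const, probReal_univ, one_smul] at h
    linarith
  have hl := Real.log_le_sub_one_of_pos (div_pos hI ha)
  rw [Real.log_div hI.ne' ha.ne'] at hl
  linarith
end

section
/- (f-divergence / Nguyen–Wainwright bound for the KL divergence.) Let P and Q be probability measures on a measurable space X with P absolutely continuous with respect to Q and with finite Kullback–Leibler divergence. Then for every bounded measurable function T : X → ℝ, one has ∫ T dP − ∫ e^{T−1} dQ ≤ D_KL(P‖Q). -/
open MeasureTheory

/-- Nguyen–Wainwright (f-divergence) lower bound for the KL divergence: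
`∫ T dP − ∫ e^{T−1} dQ ≤ D_KL(P‖Q)` for every bounded measurable `T`. -/
theorem nguyen_wainwright_bound
    {X : Type*} [MeasurableSpace X] (P Q : Measure X)
    [IsProbabilityMeasure P] [IsProbabilityMeasure Q]
    (hPQ : P ≪ Q)
    (hKL : Integrable (fun x => Real.log ((P.rnDeriv Q x).toReal)) P)
    (T : X → ℝ) (hT : Measurable T) (C : ℝ) (hC : ∀ x, |T x| ≤ C) :
    ∫ x, T x ∂P - ∫ x, Real.exp (T x - 1) ∂Q ≤ klDiv P Q := by
  have hTP : Integrable T P :=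
    Integrable.of_bound hT.aestronglyMeasurable C (Filter.Eventually.of_forall hC)
  have hE : Integrable (fun x => Real.exp (T x - 1)) Q := by
    refine Integrable.of_bound (by fun_prop) (Real.exp (C - 1)) (Filter.Eventually.of_forall ?_)
    intro x
    rw [Real.norm_eq_abs, Real.abs_exp]
    have := (abs_le.mp (hC x)).2
    exact Real.exp_le_exp.mpr (by linarith)
  have h1 := (integrable_rnDeriv_smul_iff hPQ).mpr hTP
  have h2 := (integrable_rnDeriv_smul_iff hPQ).mpr hKL
  rw [klDiv, ← integral_rnDeriv_smul hPQ (f := T),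
    ← integral_rnDeriv_smul hPQ (f := fun x => Real.log ((P.rnDeriv Q x).toReal)),
    ← integral_sub h1 hE]
  refine integral_mono (h1.sub hE) h2 fun x => ?_
  simp only [smul_eq_mul]
  generalize hr : (P.rnDeriv Q x).toReal = r
  have hr0 : 0 ≤ r := hr ▸ ENNReal.toReal_nonneg
  rcases hr0.eq_or_lt with h | h
  · subst h
    simp [Real.exp_nonneg]
  · have h3 := Real.add_one_le_exp (T x - 1 - Real.log r)
    rw [Real.exp_sub, Real.exp_log h, le_div_iff₀ h] at h3
    linarith
end
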